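/- Let n ≥ 2 be an integer and k > 0. For j ∈ ℕ define w_j(r) := cos(√k·r/2) · ₂F₁(−j, n + j, n/2; sin²(√k·r/2)) for r ∈ (0, π/√k) (the hypergeometric series terminates, so w_j is well defined). Then each w_j is a nonzero element of L²((0, π/√k), m(r)dr), the family {w_j}_{j∈ℕ} is pairwise orthogonal in this Hilbert space (∫₀^{π/√k} w_j(r)·w_{j'}(r)·m(r) dr = 0 for j ≠ j'), and the linear span of {w_j}_{j∈ℕ} is dense in L²((0, π/√k), m(r)dr); that is, the w_j form a complete orthogonal system. -/

import Mathlib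

open Real Set MeasureTheory

/-- The density of the radial measure `dμ = m(r) dr`. -/
noncomputable def radialDensity (n : ℕ) (k : ℝ) (r : ℝ) : ℝ :=
  (Real.sin (Real.sqrt k * r) / Real.sqrt k) ^ (n - 1)

/-- The radial measure `m(r) dr` on `(0, π/√k)`. -/
noncomputable def radialMeasure (n : ℕ) (k : ℝ) : Measure ℝ :=
  (volume.restrict (Ioo (0 : ℝ) (π / Real.sqrt k))).withDensity
    (fun r => ENNReal.ofReal (radialDensity n k r))

open Polynomial in
/-- The hypergeometric polynomial `₂F₁(-j, b, c; X)`. -/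
noncomputable def hypergeometricPoly (j : ℕ) (b c : ℝ) : ℝ[X] :=
  ∑ m ∈ Finset.range (j + 1), C (ordinaryHypergeometricCoefficient (-(j : ℝ)) b c m) * X ^ m

lemma ordinaryHypergeometricCoefficient_neg_nat_eq_zero {j m : ℕ} (b c : ℝ) (hm : j < m) :
    ordinaryHypergeometricCoefficient (-(j : ℝ)) b c m = 0 := by
  have h : (ascPochhammer ℝ m).eval (-(j : ℝ)) = 0 :=
    (ascPochhammer_eval_eq_zero_iff m _).2 ⟨j, hm, by simp⟩
  simp [ordinaryHypergeometricCoefficient, h]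

lemma hypergeometricPoly_coeff (j m : ℕ) (b c : ℝ) :
    (hypergeometricPoly j b c).coeff m =
      ordinaryHypergeometricCoefficient (-(j : ℝ)) b c m := by
  simp only [hypergeometricPoly, Polynomial.finsetSum_coeff, Polynomial.coeff_C_mul,
    Polynomial.coeff_X_pow, mul_ite, mul_one, mul_zero, Finset.sum_ite_eq, Finset.mem_range]
  split_ifs with h
  · rfl
  · exact (ordinaryHypergeometricCoefficient_neg_nat_eq_zero b c (by lia)).symm

lemma ordinaryHypergeometric_neg_nat_eq_eval (j : ℕ) (b c x : ℝ) :
    ₂F₁ (-(j : ℝ)) b c x = (hypergeometricPoly j b c).eval x := by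
  rw [ordinaryHypergeometric_eq_tsum]
  simp only [smul_eq_mul]
  rw [tsum_eq_sum (s := Finset.range (j + 1))]
  · simp [hypergeometricPoly, Polynomial.eval_finsetSum]
  · intro m hm
    have := ordinaryHypergeometricCoefficient_neg_nat_eq_zero b c
      (show j < m by simpa using hm)
    exact mul_eq_zero_of_left this _

lemma ordinaryHypergeometricCoefficient_succ (a b c : ℝ) (hc : 0 < c) (m : ℕ) :
    (m + 1) * (c + m) * ordinaryHypergeometricCoefficient a b c (m + 1) =
      (a + m) * (b + m) * ordinaryHypergeometricCoefficient a b c m := by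
  have hp : (ascPochhammer ℝ m).eval c ≠ 0 := (ascPochhammer_pos m c hc).ne'
  have hcm : c + m ≠ 0 := by positivity
  simp only [ordinaryHypergeometricCoefficient, ascPochhammer_succ_eval, Nat.factorial_succ]
  push_cast
  field_simp

open Polynomial in
/-- The hypergeometric differential equation. -/
lemma hypergeometricPoly_ode (j : ℕ) (b c : ℝ) (hc : 0 < c) :
    X * (1 - X) * derivative (derivative (hypergeometricPoly j b c)) +
      (C c - C (b - j + 1) * X) * derivative (hypergeometricPoly j b c) +
      C (j * b) * hypergeometricPoly j b c = 0 := by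
  have hrec (m : ℕ) : (m + 1) * (c + m) * (hypergeometricPoly j b c).coeff (m + 1) =
      (-j + m) * (b + m) * (hypergeometricPoly j b c).coeff m := by
    simpa only [hypergeometricPoly_coeff] using
      ordinaryHypergeometricCoefficient_succ (-(j : ℝ)) b c hc m
  generalize hypergeometricPoly j b c = P at hrec ⊢
  have e : X * (1 - X) * derivative (derivative P) + (C c - C (b - j + 1) * X) * derivative P +
      C (j * b) * P = X * derivative (derivative P) - X * (X * derivative (derivative P)) +
        C c * derivative P - C (b - j + 1) * (X * derivative P) + C (j * b) * P := by ring
  rw [e]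
  ext m
  have h := hrec m
  rcases m with _ | _ | m <;>
  · simp only [coeff_add, coeff_sub, coeff_C_mul, coeff_X_mul, coeff_X_mul_zero,
      coeff_derivative, coeff_zero]
    push_cast at h ⊢
    linear_combination h

lemma hypergeometricPoly_degree (j : ℕ) {b c : ℝ} (hb : 0 < b) (hc : 0 < c) :
    (hypergeometricPoly j b c).degree = j := by
  refine le_antisymm ?_ (Polynomial.le_degree_of_ne_zero ?_)
  · rw [Polynomial.degree_le_iff_coeff_zero]
    intro m hm
    rw [hypergeometricPoly_coeff]
    exact ordinaryHypergeometricCoefficient_neg_nat_eq_zero b c (by exact_mod_cast hm)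
  · rw [hypergeometricPoly_coeff]
    have h1 : (ascPochhammer ℝ j).eval (-(j : ℝ)) ≠ 0 := by
      rw [Ne, ascPochhammer_eval_eq_zero_iff]
      rintro ⟨i, hi, h⟩
      rw [neg_neg] at h
      exact hi.ne (by exact_mod_cast h)
    have h2 := (ascPochhammer_pos j b hb).ne'
    have h3 := (ascPochhammer_pos j c hc).ne'
    have h4 : (j.factorial : ℝ) ≠ 0 := by positivity
    simp [ordinaryHypergeometricCoefficient, h1, h2, h3, h4]

lemma span_hypergeometricPoly (b : ℕ → ℝ) (hb : ∀ j, 0 < b j) {c : ℝ} (hc : 0 < c) :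
    Submodule.span ℝ (Set.range fun j => hypergeometricPoly j (b j) c) = ⊤ := by
  let S : Polynomial.Sequence ℝ :=
    ⟨fun j => hypergeometricPoly j (b j) c, fun j => hypergeometricPoly_degree j (hb j) hc⟩
  exact S.span fun i => by simp [S.ne_zero]

open Polynomial in
lemma hasDerivAt_sin_pow_mul_cos_pow_mul_eval (N : ℕ) (s r : ℝ) (D : ℝ[X]) :
    HasDerivAt (fun r => sin (s * r / 2) ^ (N + 1) * cos (s * r / 2) ^ (N + 3) *
        D.eval (sin (s * r / 2) ^ 2))
      (s * (sin (s * r / 2) ^ N * cos (s * r / 2) ^ (N + 2) *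
        (X * (1 - X) * derivative D + (C (((N : ℝ) + 1) / 2) - C ((N : ℝ) + 2) * X) * D).eval
          (sin (s * r / 2) ^ 2))) r := by
  have h0 : HasDerivAt (fun r : ℝ => s * r / 2) (s / 2) r := by
    simpa using ((hasDerivAt_id r).const_mul s).div_const 2
  have hs := h0.sin
  have hD := (D.hasDerivAt (sin (s * r / 2) ^ 2)).comp r (hs.pow 2)
  refine (((hs.pow (N + 1)).mul (h0.cos.pow (N + 3))).mul hD).congr_deriv ?_
  have hc : cos (s * r / 2) ^ 2 = 1 - sin (s * r / 2) ^ 2 := by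
    rw [cos_sq']
  simp only [eval_add, eval_mul, eval_sub, eval_X, eval_C, eval_one, ← hc, Function.comp_apply,
    Pi.pow_apply, Pi.mul_apply]
  push_cast
  have hN : ((N : ℝ) + 2) * sin (s * r / 2) ^ 2 =
      ((N : ℝ) + 1) / 2 * (1 - cos (s * r / 2) ^ 2) +
        ((N : ℝ) + 3) / 2 * sin (s * r / 2) ^ 2 := by
    rw [hc]; ring
  rw [hN]
  ring

/-- Orthogonality of eigenfunctions of the hypergeometric operator. -/
lemma integral_hypergeometricPoly_mul_eq_zero (N : ℕ) {s : ℝ} (hs : 0 < s) {i j : ℕ}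
    (hij : i ≠ j) :
    ∫ r in Ioo (0 : ℝ) (π / s), sin (s * r / 2) ^ N * cos (s * r / 2) ^ (N + 2) *
      ((hypergeometricPoly i (((N + 1 : ℕ) : ℝ) + i) (((N + 1 : ℕ) : ℝ) / 2)).eval
          (sin (s * r / 2) ^ 2) *
        (hypergeometricPoly j (((N + 1 : ℕ) : ℝ) + j) (((N + 1 : ℕ) : ℝ) / 2)).eval
          (sin (s * r / 2) ^ 2)) = 0 := by
  have hP := hypergeometricPoly_ode i (((N + 1 : ℕ) : ℝ) + i) (((N + 1 : ℕ) : ℝ) / 2)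
    (by positivity)
  have hQ := hypergeometricPoly_ode j (((N + 1 : ℕ) : ℝ) + j) (((N + 1 : ℕ) : ℝ) / 2)
    (by positivity)
  generalize hypergeometricPoly i (((N + 1 : ℕ) : ℝ) + i) (((N + 1 : ℕ) : ℝ) / 2) = P at hP ⊢
  generalize hypergeometricPoly j (((N + 1 : ℕ) : ℝ) + j) (((N + 1 : ℕ) : ℝ) / 2) = Q at hQ ⊢
  let lam : ℝ := j * ((N + 1 : ℕ) + j) - i * ((N + 1 : ℕ) + i)
  have hlam : lam ≠ 0 := by
    have : lam = ((j : ℝ) - i) * ((N + 1 : ℕ) + i + j) := by simp only [lam]; ring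
    rw [this]
    exact mul_ne_zero (sub_ne_zero.2 (by exact_mod_cast hij.symm)) (by positivity)
  let D := Polynomial.derivative P * Q - P * Polynomial.derivative Q
  have hder (r : ℝ) := hasDerivAt_sin_pow_mul_cos_pow_mul_eval N s r D
  have hE (x : ℝ) : (Polynomial.X * (1 - Polynomial.X) * Polynomial.derivative D +
      (Polynomial.C (((N : ℝ) + 1) / 2) - Polynomial.C ((N : ℝ) + 2) * Polynomial.X) * D).eval x
      = lam * (P.eval x * Q.eval x) := by
    have hP' := congrArg (Polynomial.eval x) hP
    have hQ' := congrArg (Polynomial.eval x) hQ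
    simp only [Polynomial.eval_add, Polynomial.eval_mul, Polynomial.eval_sub, Polynomial.eval_X,
      Polynomial.eval_C, Polynomial.eval_one, Polynomial.eval_zero, D, lam,
      Polynomial.derivative_sub, Polynomial.derivative_mul] at hP' hQ' ⊢
    push_cast at hP' hQ' ⊢
    linear_combination Q.eval x * hP' - P.eval x * hQ'
  simp only [hE] at hder
  have hint := intervalIntegral.integral_eq_sub_of_hasDerivAt (a := 0) (b := π / s)
    (fun r _ => hder r) (Continuous.intervalIntegrable (by fun_prop) _ _)
  rw [intervalIntegral.integral_of_le (by positivity), integral_Ioc_eq_integral_Ioo] at hint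
  have e : s * (π / s) / 2 = π / 2 := by field_simp
  simp only [e, cos_pi_div_two, mul_zero, zero_div, sin_zero, ne_eq, Nat.add_eq_zero_iff,
    one_ne_zero, and_false, not_false_eq_true, zero_pow, zero_mul, OfNat.ofNat_ne_zero,
    sub_zero] at hint
  have e2 (r : ℝ) : s * (sin (s * r / 2) ^ N * cos (s * r / 2) ^ (N + 2) *
      (lam * (P.eval (sin (s * r / 2) ^ 2) * Q.eval (sin (s * r / 2) ^ 2)))) =
      (s * lam) * (sin (s * r / 2) ^ N * cos (s * r / 2) ^ (N + 2) *
      (P.eval (sin (s * r / 2) ^ 2) * Q.eval (sin (s * r / 2) ^ 2))) := by ring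
  simp only [e2, integral_const_mul] at hint
  exact (mul_eq_zero.1 hint).resolve_left (mul_ne_zero hs.ne' hlam)

lemma continuous_radialDensity (n : ℕ) (k : ℝ) : Continuous (radialDensity n k) := by
  unfold radialDensity
  fun_prop

lemma radialDensity_pos (n : ℕ) {k : ℝ} (hk : 0 < k) {r : ℝ} (hr : r ∈ Ioo 0 (π / √k)) :
    0 < radialDensity n k r := by
  have hs : 0 < √k := sqrt_pos.2 hk
  have h : √k * r < π := by
    have := (lt_div_iff₀ hs).1 hr.2
    linarith
  exact pow_pos (div_pos (sin_pos_of_pos_of_lt_pi (mul_pos hs hr.1) h) hs) _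

lemma radialDensity_eq (n : ℕ) (k r : ℝ) :
    radialDensity n k r =
      (2 / √k) ^ (n - 1) * (sin (√k * r / 2) ^ (n - 1) * cos (√k * r / 2) ^ (n - 1)) := by
  have h : sin (√k * r) = 2 * sin (√k * r / 2) * cos (√k * r / 2) := by
    rw [← sin_two_mul]
    ring_nf
  rw [radialDensity, h, ← mul_pow, ← mul_pow]
  ring

lemma isFiniteMeasure_radialMeasure (n : ℕ) (k : ℝ) : IsFiniteMeasure (radialMeasure n k) :=
  isFiniteMeasure_withDensity_ofReal
    (((continuous_radialDensity n k).integrableOn_Icc.mono_set Ioo_subset_Icc_self).2)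

lemma ae_radialMeasure_iff {n : ℕ} {k : ℝ} (hk : 0 < k) {p : ℝ → Prop} :
    (∀ᵐ r ∂radialMeasure n k, p r) ↔ ∀ᵐ r ∂volume.restrict (Ioo 0 (π / √k)), p r := by
  rw [radialMeasure, ae_withDensity_iff (continuous_radialDensity n k).measurable.ennreal_ofReal]
  refine Filter.eventually_congr ?_
  filter_upwards [ae_restrict_mem measurableSet_Ioo] with r hr
  simp [radialDensity_pos n hk hr]

lemma ae_radialMeasure_mem {n : ℕ} {k : ℝ} (hk : 0 < k) :
    ∀ᵐ r ∂radialMeasure n k, r ∈ Ioo 0 (π / √k) :=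
  (ae_radialMeasure_iff hk).2 (ae_restrict_mem measurableSet_Ioo)

lemma Continuous.memLp_radialMeasure {f : ℝ → ℝ} (hf : Continuous f) (n : ℕ) {k : ℝ}
    (hk : 0 < k) (p : ENNReal) : MemLp f p (radialMeasure n k) := by
  have := isFiniteMeasure_radialMeasure n k
  obtain ⟨C, hC⟩ := isCompact_Icc.exists_bound_of_continuousOn
    (hf.continuousOn (s := Icc 0 (π / √k)))
  refine MemLp.of_bound hf.aestronglyMeasurable C ?_
  filter_upwards [ae_radialMeasure_mem hk] with r hr using hC r (Ioo_subset_Icc_self hr)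

/-- A continuous function on `[0, π/s]` is a uniform limit of polynomials in `sin² (s r / 2)`. -/
lemma exists_polynomial_sin_sq_near {s : ℝ} (hs : 0 < s) {g : ℝ → ℝ} (hg : Continuous g)
    {ε : ℝ} (hε : 0 < ε) :
    ∃ p : Polynomial ℝ, ∀ r ∈ Icc 0 (π / s), |p.eval (sin (s * r / 2) ^ 2) - g r| < ε := by
  obtain ⟨p, hp⟩ := exists_polynomial_near_of_continuousOn 0 1
    (fun x => g (2 / s * arcsin (√x))) (by fun_prop) ε hε
  refine ⟨p, fun r hr => ?_⟩
  have h := hp (sin (s * r / 2) ^ 2) ⟨sq_nonneg _, sin_sq_le_one _⟩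
  have h0 : 0 ≤ s * r / 2 := by have := hr.1; positivity
  have h1 : s * r / 2 ≤ π / 2 := by
    have := (le_div_iff₀ hs).1 hr.2
    linarith
  have h2 : 2 / s * arcsin (√(sin (s * r / 2) ^ 2)) = r := by
    rw [sqrt_sq (sin_nonneg_of_nonneg_of_le_pi h0 (by linarith [pi_pos])),
      arcsin_sin (by linarith [pi_pos]) h1]
    field_simp
  rwa [h2] at h

lemma ae_eq_zero_of_integral_polynomial_sin_sq {n : ℕ} {k : ℝ} (hk : 0 < k) {f : ℝ → ℝ}
    (hf : Integrable f (radialMeasure n k))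
    (h : ∀ p : Polynomial ℝ, ∫ r, p.eval (sin (√k * r / 2) ^ 2) * f r ∂radialMeasure n k = 0) :
    f =ᵐ[radialMeasure n k] 0 := by
  refine ae_eq_zero_of_integral_contDiff_smul_eq_zero hf.locallyIntegrable fun g hg _ => ?_
  have hbound (u : ℝ → ℝ) (hu : Continuous u) :
      Integrable (fun r => u r * f r) (radialMeasure n k) := by
    obtain ⟨C, hC⟩ := isCompact_Icc.exists_bound_of_continuousOn
      (hu.continuousOn (s := Icc 0 (π / √k)))
    refine hf.bdd_mul hu.aestronglyMeasurable (c := C) ?_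
    filter_upwards [ae_radialMeasure_mem hk] with r hr using hC r (Ioo_subset_Icc_self hr)
  have hsmall (ε : ℝ) (hε : 0 < ε) :
      |∫ r, g r * f r ∂radialMeasure n k| ≤ ε * ∫ r, |f r| ∂radialMeasure n k := by
    obtain ⟨p, hp⟩ := exists_polynomial_sin_sq_near (sqrt_pos.2 hk) hg.continuous hε
    have e : ∫ r, g r * f r ∂radialMeasure n k =
        ∫ r, (g r - p.eval (sin (√k * r / 2) ^ 2)) * f r ∂radialMeasure n k := by
      simp only [sub_mul]
      rw [integral_sub (hbound g hg.continuous) (hbound _ (by fun_prop)), h p, sub_zero]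
    rw [e, ← integral_const_mul, ← norm_eq_abs]
    refine norm_integral_le_of_norm_le (hf.abs.const_mul ε) ?_
    filter_upwards [ae_radialMeasure_mem hk] with r hr
    rw [norm_mul, norm_eq_abs, norm_eq_abs, abs_sub_comm]
    exact mul_le_mul_of_nonneg_right (hp r (Ioo_subset_Icc_self hr)).le (abs_nonneg _)
  simp only [smul_eq_mul]
  by_contra hne
  have hpos := abs_pos.2 hne
  set I := ∫ r, |f r| ∂radialMeasure n k
  have hI : 0 ≤ I := integral_nonneg fun _ => abs_nonneg _
  have := hsmall (|∫ r, g r * f r ∂radialMeasure n k| / (I + 1)) (by positivity)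
  rw [div_mul_eq_mul_div, le_div_iff₀ (by positivity)] at this
  linarith

theorem complete_orthogonal_system (n : ℕ) (hn : 2 ≤ n) (k : ℝ) (hk : 0 < k)
    (w : ℕ → ℝ → ℝ)
    (hw : ∀ (j : ℕ) (r : ℝ), w j r = Real.cos (Real.sqrt k * r / 2) *
      ₂F₁ (-(j : ℝ)) ((n : ℝ) + j) ((n : ℝ) / 2) (Real.sin (Real.sqrt k * r / 2) ^ 2)) :
    ∃ hmem : ∀ j : ℕ, MemLp (w j) 2 (radialMeasure n k),
      (∀ j : ℕ, (hmem j).toLp (w j) ≠ 0) ∧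
      (∀ j j' : ℕ, j ≠ j' →
        ∫ r in Ioo (0 : ℝ) (π / Real.sqrt k),
          w j r * w j' r * radialDensity n k r = 0) ∧
      Dense (↑(Submodule.span ℝ (Set.range fun j : ℕ => (hmem j).toLp (w j))) :
        Set (Lp ℝ 2 (radialMeasure n k))) := by
  have hs : 0 < √k := sqrt_pos.2 hk
  have hT : 0 < π / √k := div_pos pi_pos hs
  have hn0 : (0 : ℝ) < n := by exact_mod_cast (by lia : 0 < n)
  have hw0 (j : ℕ) : w j 0 = 1 := by simp [hw]
  simp only [ordinaryHypergeometric_neg_nat_eq_eval] at hw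
  have hcont (j : ℕ) : Continuous (w j) := by
    rw [funext (hw j)]
    fun_prop
  have hmem (j : ℕ) : MemLp (w j) 2 (radialMeasure n k) :=
    (hcont j).memLp_radialMeasure n hk 2
  refine ⟨hmem, fun j h => ?_, fun i j hij => ?_, ?_⟩
  · have hae := (hmem j).coeFn_toLp.symm.trans
      ((Lp.eq_zero_iff_ae_eq_zero).1 h)
    have heq := Measure.eqOn_open_of_ae_eq ((ae_radialMeasure_iff hk).1 hae) isOpen_Ioo
      (hcont j).continuousOn continuousOn_const
    have h0 := heq.closure (hcont j) continuous_const
      (show (0 : ℝ) ∈ closure (Ioo 0 (π / √k)) by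
        rw [closure_Ioo hT.ne]
        exact left_mem_Icc.2 hT.le)
    simp [hw0] at h0
  · obtain ⟨N, rfl⟩ : ∃ N, n = N + 1 := ⟨n - 1, by lia⟩
    have h := congrArg ((2 / √k) ^ N * ·) (integral_hypergeometricPoly_mul_eq_zero N hs hij)
    simp only [← integral_const_mul, mul_zero] at h
    refine (integral_congr_ae (ae_of_all _ fun r => ?_)).trans h
    simp only [hw, radialDensity_eq, Nat.add_sub_cancel]
    ring
  · rw [Submodule.dense_iff_topologicalClosure_eq_top, Submodule.topologicalClosure_eq_top_iff,
      Submodule.eq_bot_iff]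
    intro f hf
    have hcos : MemLp (fun r => cos (√k * r / 2)) 2 (radialMeasure n k) :=
      Continuous.memLp_radialMeasure (by fun_prop) n hk 2
    have hpoly (p : Polynomial ℝ) : MemLp (fun r => cos (√k * r / 2) *
        p.eval (sin (√k * r / 2) ^ 2)) 2 (radialMeasure n k) :=
      Continuous.memLp_radialMeasure (by fun_prop) n hk 2
    have hint (p : Polynomial ℝ) : Integrable (fun r => p.eval (sin (√k * r / 2) ^ 2) *
        (cos (√k * r / 2) * f r)) (radialMeasure n k) := by
      refine ((hpoly p).integrable_mul (Lp.memLp f)).congr (ae_of_all _ fun r => ?_)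
      simp only [Pi.mul_apply]
      ring
    have horth (p : Polynomial ℝ) : ∫ r, p.eval (sin (√k * r / 2) ^ 2) *
        (cos (√k * r / 2) * f r) ∂radialMeasure n k = 0 := by
      have hp : p ∈ Submodule.span ℝ (Set.range fun j : ℕ =>
          hypergeometricPoly j ((n : ℝ) + j) ((n : ℝ) / 2)) := by
        rw [span_hypergeometricPoly _ (fun j => by positivity) (by positivity)]
        trivial
      induction hp using Submodule.span_induction with
      | mem p hp =>
        obtain ⟨j, rfl⟩ := hp
        have hj := (Submodule.mem_orthogonal _ f).1 hf _
          (Submodule.subset_span (Set.mem_range_self j))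
        rw [L2.inner_def] at hj
        rw [← hj]
        refine integral_congr_ae ?_
        filter_upwards [(hmem j).coeFn_toLp] with r hr
        simp only [hr, hw, RCLike.inner_apply, conj_trivial]
        ring
      | zero => simp
      | add p q _ _ hp hq =>
        simp only [Polynomial.eval_add, add_mul]
        rw [integral_add (hint p) (hint q), hp, hq, add_zero]
      | smul a p _ hp =>
        simp only [Polynomial.eval_smul, smul_eq_mul, mul_assoc, integral_const_mul, hp, mul_zero]
    have hzero := ae_eq_zero_of_integral_polynomial_sin_sq hk
      (hcos.integrable_mul (Lp.memLp f)) horth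
    rw [Lp.eq_zero_iff_ae_eq_zero]
    filter_upwards [hzero, ae_radialMeasure_mem hk] with r hr hrI
    have h1 : √k * r < π := by
      have := (lt_div_iff₀ hs).1 hrI.2
      linarith
    have h2 : 0 < √k * r := mul_pos hs hrI.1
    have h3 : 0 < cos (√k * r / 2) :=
      cos_pos_of_mem_Ioo ⟨by linarith [pi_pos], by linarith⟩
    exact (mul_eq_zero.1 hr).resolve_left h3.ne'
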